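/- Let A be a C*-algebra, let α₁, α₂ : A → A be injective *-homomorphisms, and let P₁, P₂, L₁, L₂, L : A → A be maps satisfying: α₁ ∘ L₁ = P₁, α₂ ∘ L₂ = P₂, (α₁ ∘ α₂) ∘ L = P₁ ∘ P₂, P₁ ∘ P₂ = P₂ ∘ P₁, P₂ ∘ α₁ = α₁ ∘ P₂, and the bimodule property P₁(α₁(b)* x α₁(c)) = α₁(b)* P₁(x) α₁(c) for all b, c, x ∈ A. Then for all a₁, a₂, b₁, b₂ ∈ A one has L((a₁ α₁(b₁))* (a₂ α₁(b₂))) = L₂(b₁* L₁(a₁* a₂) b₂). -/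

import Mathlib

/-!
STATEMENT 8: For a C*-algebra `A`, injective *-homomorphisms `α₁, α₂ : A → A` and maps
`P₁, P₂, L₁, L₂, L : A → A` with `α₁ ∘ L₁ = P₁`, `α₂ ∘ L₂ = P₂`, `(α₁ ∘ α₂) ∘ L = P₁ ∘ P₂`,
`P₁ ∘ P₂ = P₂ ∘ P₁`, `P₂ ∘ α₁ = α₁ ∘ P₂` and the bimodule property
`P₁(α₁(b)* x α₁(c)) = α₁(b)* P₁(x) α₁(c)`, one has
`L((a₁ α₁(b₁))* (a₂ α₁(b₂))) = L₂(b₁* L₁(a₁* a₂) b₂)` for all `a₁ a₂ b₁ b₂`.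
-/

/-- The relation `α ∘ L = P` by which `L` is a transfer operator for `α` with respect to `P`. The
source and target of `α` may differ, and `P` is an arbitrary map rather than a conditional
expectation. -/
def IsTransferOperator {A B : Type*} (α : B → A) (P : A → A) (L : A → B) : Prop :=
  ∀ x, α (L x) = P x

namespace IsTransferOperator

theorem unique {A B : Type*} {α : B → A} {P : A → A} {L L' : A → B}
    (hL : IsTransferOperator α P L) (hL' : IsTransferOperator α P L')
    (hα : Function.Injective α) : L = L' :=
  funext fun x => hα ((hL x).trans (hL' x).symm)

theorem comp {A B C : Type*} {α₁ : B → A} {α₂ : C → B} {P₁ P₂ : A → A} {Q₂ : B → B}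
    {L₁ : A → B} {L₂ : B → C} (hL₁ : IsTransferOperator α₁ P₁ L₁)
    (hL₂ : IsTransferOperator α₂ Q₂ L₂) (hPP : Function.Commute P₁ P₂)
    (hPα : Function.Semiconj α₁ Q₂ P₂) :
    IsTransferOperator (α₁ ∘ α₂) (P₁ ∘ P₂) (L₂ ∘ L₁) := fun x =>
  calc
    α₁ (α₂ (L₂ (L₁ x))) = α₁ (Q₂ (L₁ x)) := congrArg α₁ (hL₂ (L₁ x))
    _ = P₂ (α₁ (L₁ x)) := hPα (L₁ x)
    _ = P₂ (P₁ x) := congrArg P₂ (hL₁ x)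
    _ = P₁ (P₂ x) := (hPP x).symm

theorem apply_star_map_mul_mul_map {A B F : Type*} [Mul A] [Star A] [Mul B] [Star B]
    [FunLike F B A] [MulHomClass F B A] [StarHomClass F B A] {α : F} {P : A → A} {L : A → B}
    (hL : IsTransferOperator α P L) (hα : Function.Injective α)
    (hP : ∀ b c x, P (star (α b) * x * α c) = star (α b) * P x * α c) (b c : B) (x : A) :
    L (star (α b) * x * α c) = star b * L x * c := by
  apply hα
  calc
    α (L (star (α b) * x * α c)) = P (star (α b) * x * α c) := hL _
    _ = star (α b) * P x * α c := hP b c x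
    _ = star (α b) * α (L x) * α c := by rw [hL x]
    _ = α (star b * L x * c) := by rw [map_mul, map_mul, map_star]

end IsTransferOperator

theorem inner_product_of_tensor_bimodule_general
    {A B C F : Type*} [Semigroup A] [StarMul A] [Mul B] [Star B]
    [FunLike F B A] [MulHomClass F B A] [StarHomClass F B A]
    {α₁ : F} {α₂ : C → B} (hα₁ : Function.Injective α₁) (hα₂ : Function.Injective α₂)
    {P₁ P₂ : A → A} {Q₂ : B → B} {L₁ : A → B} {L₂ : B → C} {L : A → C}
    (hL₁ : IsTransferOperator α₁ P₁ L₁)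
    (hL₂ : IsTransferOperator α₂ Q₂ L₂)
    (hL : IsTransferOperator (α₁ ∘ α₂) (P₁ ∘ P₂) L)
    (hPP : Function.Commute P₁ P₂)
    (hPα : Function.Semiconj α₁ Q₂ P₂)
    (hbim : ∀ b c x, P₁ (star (α₁ b) * x * α₁ c) = star (α₁ b) * P₁ x * α₁ c)
    (a₁ a₂ : A) (b₁ b₂ : B) :
    L (star (a₁ * α₁ b₁) * (a₂ * α₁ b₂)) = L₂ (star b₁ * L₁ (star a₁ * a₂) * b₂) := by
  have L_eq_comp : L = L₂ ∘ L₁ := hL.unique (hL₁.comp hL₂ hPP hPα) (hα₁.comp hα₂)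
  calc
    L (star (a₁ * α₁ b₁) * (a₂ * α₁ b₂))
        = L₂ (L₁ (star (α₁ b₁) * (star a₁ * a₂) * α₁ b₂)) := by
      simp only [L_eq_comp, Function.comp_apply, star_mul, mul_assoc]
    _ = L₂ (star b₁ * L₁ (star a₁ * a₂) * b₂) := by
      rw [hL₁.apply_star_map_mul_mul_map hα₁ hbim]

theorem inner_product_of_tensor_bimodule
    {A : Type*} [CStarAlgebra A]
    (α₁ α₂ : A →⋆ₐ[ℂ] A) (hα₁ : Function.Injective α₁) (hα₂ : Function.Injective α₂)
    (P₁ P₂ L₁ L₂ L : A → A)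
    (hL₁ : ∀ x, α₁ (L₁ x) = P₁ x)
    (hL₂ : ∀ x, α₂ (L₂ x) = P₂ x)
    (hL : ∀ x, α₁ (α₂ (L x)) = P₁ (P₂ x))
    (hPP : ∀ x, P₁ (P₂ x) = P₂ (P₁ x))
    (hPα : ∀ x, P₂ (α₁ x) = α₁ (P₂ x))
    (hbim : ∀ b c x : A, P₁ (star (α₁ b) * x * α₁ c) = star (α₁ b) * P₁ x * α₁ c) :
    ∀ a₁ a₂ b₁ b₂ : A,
      L (star (a₁ * α₁ b₁) * (a₂ * α₁ b₂)) = L₂ (star b₁ * L₁ (star a₁ * a₂) * b₂) := by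
  exact inner_product_of_tensor_bimodule_general hα₁ hα₂ hL₁ hL₂ hL hPP
    (fun x => (hPα x).symm) hbim
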